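/- For every index p ∈ {1,…,d}, the variance of the single-sample diagonal estimator satisfies E[ (uᵀAu·u_p² − uᵀAu − 2A_{p,p})² ] = 2·(tr(A) + 4A_{p,p})² + ‖A + Aᵀ‖² + 8·‖A_{p,:} + A_{:,p}‖² − 12·A_{p,p}². -/

import Mathlib

open MeasureTheory ProbabilityTheory Finset

noncomputable def stdGaussianVec (d : ℕ) : Measure (Fin d → ℝ) :=
  Measure.pi fun _ => gaussianReal 0 1

def quadForm {d : ℕ} (A : Matrix (Fin d) (Fin d) ℝ) (u : Fin d → ℝ) : ℝ :=
  ∑ i, ∑ j, A i j * u i * u j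

lemma gint_pow (n : ℕ) : Integrable (fun x : ℝ => x ^ n) (gaussianReal 0 1) := by
  have h := (memLp_id_gaussianReal (μ := 0) (v := 1) (n : NNReal))
  have h2 : MemLp (id : ℝ → ℝ) (n : ENNReal) (gaussianReal 0 1) := by simpa using h
  have h3 := h2.integrable_norm_pow'
  refine h3.mono' (by fun_prop) (ae_of_all _ fun x => ?_)
  simp

lemma gint_pow_pdf (n : ℕ) : Integrable (fun x : ℝ => gaussianPDFReal 0 1 x * x ^ n) := by
  have h := gint_pow n
  rw [gaussianReal_of_var_ne_zero _ (by simp),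
    integrable_withDensity_iff_integrable_smul' (measurable_gaussianPDF _ _)
      (ae_of_all _ fun _ ↦ gaussianPDF_lt_top)] at h
  simpa using h

lemma hasDeriv_pdf (x : ℝ) :
    HasDerivAt (gaussianPDFReal 0 1) (-x * gaussianPDFReal 0 1 x) x := by
  have h : HasDerivAt (fun x : ℝ => -(x - 0) ^ 2 / (2 * ((1 : NNReal) : ℝ))) (-x) x := by
    have := (((hasDerivAt_id x).sub_const 0).pow 2).neg.div_const (2 * ((1 : NNReal) : ℝ))
    refine (this.congr_deriv ?_)
    simp
    ring
  have h2 := h.exp.const_mul ((√(2 * Real.pi * ((1 : NNReal) : ℝ)))⁻¹)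
  rw [gaussianPDFReal_def]
  refine h2.congr_deriv ?_
  ring

lemma moment_succ (k : ℕ) :
    ∫ x, x ^ (k + 1) ∂(gaussianReal 0 1) = k * ∫ x, x ^ (k - 1) ∂(gaussianReal 0 1) := by
  simp only [integral_gaussianReal_eq_integral_smul (one_ne_zero : (1 : NNReal) ≠ 0), smul_eq_mul]
  have hd : ∀ x : ℝ, HasDerivAt (fun x => gaussianPDFReal 0 1 x * x ^ k)
      (k * (gaussianPDFReal 0 1 x * x ^ (k - 1)) - gaussianPDFReal 0 1 x * x ^ (k + 1)) x := by
    intro x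
    refine ((hasDeriv_pdf x).mul (hasDerivAt_pow k x)).congr_deriv ?_
    ring
  have i1 := (gint_pow_pdf (k - 1)).const_mul (k : ℝ)
  have i2 := gint_pow_pdf (k + 1)
  have := integral_eq_zero_of_hasDerivAt_of_integrable hd (i1.sub i2) (gint_pow_pdf k)
  rw [integral_sub i1 i2, integral_const_mul] at this
  linarith

lemma integrable_monomial {d : ℕ} (n : Fin d → ℕ) :
    Integrable (fun u : Fin d → ℝ => ∏ i, u i ^ n i) (stdGaussianVec d) := 
  Integrable.fintype_prod_dep (f := fun i x => x ^ n i) fun i => gint_pow (n i)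

lemma integrable_eval {d : ℕ} (q : MvPolynomial (Fin d) ℝ) :
    Integrable (fun u : Fin d → ℝ => MvPolynomial.eval u q) (stdGaussianVec d) := by
  induction q using MvPolynomial.induction_on' with
  | monomial n a =>
    simp only [MvPolynomial.eval_monomial, Finsupp.prod_pow]
    exact (integrable_monomial n).const_mul a
  | add p q hp hq =>
    simp only [map_add]
    exact hp.add hq

/-- Gaussian expectation as a linear functional on polynomials. -/
noncomputable def gE (d : ℕ) : MvPolynomial (Fin d) ℝ →ₗ[ℝ] ℝ where
  toFun q := ∫ u, MvPolynomial.eval u q ∂(stdGaussianVec d)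
  map_add' p q := by
    simp only [map_add]
    exact integral_add (integrable_eval p) (integrable_eval q)
  map_smul' c p := by
    simp only [MvPolynomial.smul_eval, integral_const_mul, RingHom.id_apply, smul_eq_mul]

lemma gE_monomial {d : ℕ} (n : Fin d →₀ ℕ) (a : ℝ) :
    gE d (MvPolynomial.monomial n a) = a * ∏ i, ∫ x, x ^ n i ∂(gaussianReal 0 1) := by
  change ∫ u, MvPolynomial.eval u _ ∂(stdGaussianVec d) = _
  simp only [MvPolynomial.eval_monomial, Finsupp.prod_pow, integral_const_mul, stdGaussianVec]
  congr 1
  exact integral_fintype_prod_eq_prod (fun i x => x ^ n i)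

lemma gE_one {d : ℕ} : gE d 1 = 1 := by
  have := gE_monomial (d := d) 0 1
  simpa using this

/-- Gaussian integration by parts. -/
lemma gE_X_mul {d : ℕ} (i : Fin d) (q : MvPolynomial (Fin d) ℝ) :
    gE d (MvPolynomial.X i * q) = gE d (MvPolynomial.pderiv i q) := by
  induction q using MvPolynomial.induction_on' with
  | monomial n a =>
    rw [MvPolynomial.pderiv_monomial, MvPolynomial.X, MvPolynomial.monomial_mul, gE_monomial,
      gE_monomial, ← Finset.mul_prod_erase _ _ (mem_univ i), ← Finset.mul_prod_erase _ _ (mem_univ i)]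
    have h : ∏ j ∈ univ.erase i, ∫ x, x ^ (Finsupp.single i 1 + n : Fin d →₀ ℕ) j ∂(gaussianReal 0 1)
      = ∏ j ∈ univ.erase i, ∫ x, x ^ (n - Finsupp.single i 1 : Fin d →₀ ℕ) j ∂(gaussianReal 0 1) := by
      refine Finset.prod_congr rfl fun j hj => ?_
      have : i ≠ j := (Finset.ne_of_mem_erase hj).symm
      simp [this]
    rw [h]
    have h1 : (Finsupp.single i 1 + n : Fin d →₀ ℕ) i = n i + 1 := by simp [add_comm]
    have h2 : (n - Finsupp.single i 1 : Fin d →₀ ℕ) i = n i - 1 := by simp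
    rw [h1, h2, moment_succ]
    ring
  | add p q hp hq => simp only [mul_add, map_add, hp, hq]

/-- Kronecker delta. -/
def kd {d : ℕ} (i j : Fin d) : ℝ := if i = j then 1 else 0

lemma pderiv_X_kd {d : ℕ} (i j : Fin d) :
    MvPolynomial.pderiv i (MvPolynomial.X j : MvPolynomial (Fin d) ℝ) = MvPolynomial.C (kd i j) := by
  rw [MvPolynomial.pderiv_X, kd, Pi.single_apply]
  by_cases h : i = j
  · simp [h]
  · simp [h, Ne.symm h]

lemma gE_C_mul {d : ℕ} (c : ℝ) (q : MvPolynomial (Fin d) ℝ) :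
    gE d (MvPolynomial.C c * q) = c * gE d q := by
  rw [← MvPolynomial.smul_eq_C_mul, map_smul, smul_eq_mul]

/-- A univariate polynomial at the coordinate `p`. -/
noncomputable def uv {d : ℕ} (p : Fin d) (W : Polynomial ℝ) : MvPolynomial (Fin d) ℝ :=
  Polynomial.aeval (MvPolynomial.X p) W

lemma pderiv_uv {d : ℕ} (i p : Fin d) (W : Polynomial ℝ) :
    MvPolynomial.pderiv i (uv p W) = MvPolynomial.C (kd i p) * uv p (Polynomial.derivative W) := by
  rw [uv, Derivation.map_aeval, pderiv_X_kd, smul_eq_mul, mul_comm, uv]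

lemma gE1 {d : ℕ} (i p : Fin d) (W : Polynomial ℝ) :
    gE d (MvPolynomial.X i * uv p W) = kd i p * gE d (uv p (Polynomial.derivative W)) := by
  rw [gE_X_mul, pderiv_uv, gE_C_mul]

lemma gE2 {d : ℕ} (i j p : Fin d) (W : Polynomial ℝ) :
    gE d (MvPolynomial.X i * (MvPolynomial.X j * uv p W)) =
      kd i j * gE d (uv p W) + kd i p * kd j p *
        gE d (uv p (Polynomial.derivative (Polynomial.derivative W))) := by
  rw [gE_X_mul, MvPolynomial.pderiv_mul, pderiv_uv, pderiv_X_kd, map_add, gE_C_mul,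
    mul_left_comm, gE_C_mul, gE1]
  ring

lemma gE3 {d : ℕ} (i j k p : Fin d) (W : Polynomial ℝ) :
    gE d (MvPolynomial.X i * (MvPolynomial.X j * (MvPolynomial.X k * uv p W))) =
      (kd i j * kd k p + kd i k * kd j p + kd j k * kd i p) *
        gE d (uv p (Polynomial.derivative W)) + kd i p * kd j p * kd k p *
        gE d (uv p (Polynomial.derivative (Polynomial.derivative (Polynomial.derivative W)))) := by
  have e : MvPolynomial.pderiv i (MvPolynomial.X j * (MvPolynomial.X k * uv p W)) =
      MvPolynomial.C (kd i j) * (MvPolynomial.X k * uv p W) +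
      MvPolynomial.C (kd i k) * (MvPolynomial.X j * uv p W) +
      MvPolynomial.C (kd i p) *
        (MvPolynomial.X j * (MvPolynomial.X k * uv p (Polynomial.derivative W))) := by
    simp only [MvPolynomial.pderiv_mul, pderiv_uv, pderiv_X_kd]
    ring
  rw [gE_X_mul, e, map_add, map_add, gE_C_mul, gE_C_mul, gE_C_mul, gE1, gE1, gE2]
  ring

lemma gE4 {d : ℕ} (i j k l p : Fin d) (W : Polynomial ℝ) :
    gE d (MvPolynomial.X i * (MvPolynomial.X j * (MvPolynomial.X k * (MvPolynomial.X l * uv p W)))) =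
      (kd i j * kd k l + kd i k * kd j l + kd i l * kd j k) * gE d (uv p W) +
      (kd i j * kd k p * kd l p + kd i k * kd j p * kd l p + kd i l * kd j p * kd k p
        + kd j k * kd i p * kd l p + kd j l * kd i p * kd k p + kd k l * kd i p * kd j p) *
        gE d (uv p (Polynomial.derivative (Polynomial.derivative W))) +
      kd i p * kd j p * kd k p * kd l p *
        gE d (uv p (Polynomial.derivative (Polynomial.derivative
          (Polynomial.derivative (Polynomial.derivative W))))) := by
  have e : MvPolynomial.pderiv i
        (MvPolynomial.X j * (MvPolynomial.X k * (MvPolynomial.X l * uv p W))) =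
      MvPolynomial.C (kd i j) * (MvPolynomial.X k * (MvPolynomial.X l * uv p W)) +
      MvPolynomial.C (kd i k) * (MvPolynomial.X j * (MvPolynomial.X l * uv p W)) +
      MvPolynomial.C (kd i l) * (MvPolynomial.X j * (MvPolynomial.X k * uv p W)) +
      MvPolynomial.C (kd i p) *
        (MvPolynomial.X j * (MvPolynomial.X k * (MvPolynomial.X l *
          uv p (Polynomial.derivative W)))) := by
    simp only [MvPolynomial.pderiv_mul, pderiv_uv, pderiv_X_kd]
    ring
  rw [gE_X_mul, e, map_add, map_add, map_add, gE_C_mul, gE_C_mul, gE_C_mul, gE_C_mul,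
    gE2, gE2, gE2, gE3]
  ring

lemma gE_X {d : ℕ} (p : Fin d) : gE d (MvPolynomial.X p ^ 2) = 1 := by
  rw [pow_two, gE_X_mul, MvPolynomial.pderiv_X_self, gE_one]

lemma gE_C {d : ℕ} (c : ℝ) : gE d (MvPolynomial.C c) = c := by
  have := gE_C_mul (d := d) c 1
  simpa [gE_one] using this

lemma gE_X4 {d : ℕ} (p : Fin d) : gE d (MvPolynomial.X p ^ 4) = 3 := by
  have h : MvPolynomial.pderiv p ((MvPolynomial.X p : MvPolynomial (Fin d) ℝ) ^ 3)
      = MvPolynomial.C 3 * MvPolynomial.X p ^ 2 := by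
    rw [MvPolynomial.pderiv_pow, MvPolynomial.pderiv_X_self]; simp [map_ofNat]
  rw [pow_succ', gE_X_mul, h, gE_C_mul, gE_X, mul_one]

/-- `W = (X^2 - 1)^2`. -/
noncomputable def W4 : Polynomial ℝ :=
  Polynomial.X ^ 4 + (Polynomial.C (-2) * Polynomial.X ^ 2 + Polynomial.C 1)
/-- `V = X^2 - 1`. -/
noncomputable def W2 : Polynomial ℝ := Polynomial.X ^ 2 + Polynomial.C (-1)

lemma uv_quad {d : ℕ} (p : Fin d) (a b c : ℝ) :
    gE d (uv p (Polynomial.C a * Polynomial.X ^ 4 + Polynomial.C b * Polynomial.X ^ 2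
      + Polynomial.C c)) = 3 * a + b + c := by
  simp only [uv, map_add, map_mul, map_pow, Polynomial.aeval_C, Polynomial.aeval_X,
    MvPolynomial.algebraMap_eq, gE_C_mul, gE_C, gE_X, gE_X4]
  ring

lemma W4_0 {d : ℕ} (p : Fin d) : gE d (uv p W4) = 2 := by
  have := uv_quad p 1 (-2) 1
  rw [show W4 = Polynomial.C 1 * Polynomial.X ^ 4 + Polynomial.C (-2) * Polynomial.X ^ 2
      + Polynomial.C 1 by rw [W4]; simp [add_assoc], this]
  norm_num

lemma W4_2 {d : ℕ} (p : Fin d) :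
    gE d (uv p (Polynomial.derivative (Polynomial.derivative W4))) = 8 := by
  have := uv_quad p 0 12 (-4)
  rw [show Polynomial.derivative (Polynomial.derivative W4) =
      Polynomial.C 0 * Polynomial.X ^ 4 + Polynomial.C 12 * Polynomial.X ^ 2
      + Polynomial.C (-4) by
        simp [W4]; simp only [map_ofNat]; ring, this]
  norm_num

lemma W4_4 {d : ℕ} (p : Fin d) :
    gE d (uv p (Polynomial.derivative (Polynomial.derivative
          (Polynomial.derivative (Polynomial.derivative W4))))) = 24 := by
  have := uv_quad p 0 0 24
  rw [show Polynomial.derivative (Polynomial.derivative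
      (Polynomial.derivative (Polynomial.derivative W4))) =
      Polynomial.C 0 * Polynomial.X ^ 4 + Polynomial.C 0 * Polynomial.X ^ 2
      + Polynomial.C 24 by
        simp [W4]; simp only [map_ofNat]; ring, this]
  norm_num

lemma W2_0 {d : ℕ} (p : Fin d) : gE d (uv p W2) = 0 := by
  have := uv_quad p 0 1 (-1)
  rw [show W2 = Polynomial.C 0 * Polynomial.X ^ 4 + Polynomial.C 1 * Polynomial.X ^ 2
      + Polynomial.C (-1) by rw [W2]; simp, this]
  norm_num

lemma W2_2 {d : ℕ} (p : Fin d) :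
    gE d (uv p (Polynomial.derivative (Polynomial.derivative W2))) = 2 := by
  have := uv_quad p 0 0 2
  rw [show Polynomial.derivative (Polynomial.derivative W2) =
      Polynomial.C 0 * Polynomial.X ^ 4 + Polynomial.C 0 * Polynomial.X ^ 2
      + Polynomial.C 2 by simp [W2]; simp only [map_ofNat]; ring, this]
  norm_num

theorem variance_explicit {d : ℕ} (hd : 1 ≤ d)
    (A : Matrix (Fin d) (Fin d) ℝ) (p : Fin d) :
    ∫ u, (quadForm A u * (u p) ^ 2 - quadForm A u - 2 * A p p) ^ 2
        ∂(stdGaussianVec d)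
      = 2 * ((∑ i, A i i) + 4 * A p p) ^ 2
        + (∑ i, ∑ j, (A i j + A j i) ^ 2)
        + 8 * (∑ i, (A p i + A i p) ^ 2)
        - 12 * (A p p) ^ 2 := by
  have h1 : ∫ u, (quadForm A u * (u p) ^ 2 - quadForm A u - 2 * A p p) ^ 2 ∂(stdGaussianVec d)
      = gE d ((∑ i, ∑ j, ∑ k, ∑ l, MvPolynomial.C (A i j * A k l) *
          (MvPolynomial.X i * (MvPolynomial.X j * (MvPolynomial.X k *
            (MvPolynomial.X l * uv p W4)))))
        + (MvPolynomial.C (-4 * A p p) * (∑ i, ∑ j, MvPolynomial.C (A i j) *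
            (MvPolynomial.X i * (MvPolynomial.X j * uv p W2)))
          + MvPolynomial.C (4 * A p p ^ 2))) := by
    change _ = ∫ u, MvPolynomial.eval u _ ∂(stdGaussianVec d)
    refine integral_congr_ae (ae_of_all _ fun u => ?_)
    have e4 : MvPolynomial.eval u (uv p W4) = (u p ^ 2 - 1) ^ 2 := by
      simp [uv, W4]; ring
    have e2 : MvPolynomial.eval u (uv p W2) = u p ^ 2 - 1 := by
      simp [uv, W2]; ring
    simp only [map_add, map_sum, map_mul, MvPolynomial.eval_C, MvPolynomial.eval_X, e4, e2]
    have q2 : ∑ i, ∑ j, A i j * (u i * (u j * (u p ^ 2 - 1))) = quadForm A u * (u p ^ 2 - 1) := by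
      simp only [quadForm, sum_mul]
      exact sum_congr rfl fun i _ => sum_congr rfl fun j _ => by ring
    have q4 : ∑ i, ∑ j, ∑ k, ∑ l, A i j * A k l * (u i * (u j * (u k * (u l * (u p ^ 2 - 1) ^ 2))))
        = quadForm A u * quadForm A u * (u p ^ 2 - 1) ^ 2 := by
      simp only [quadForm, sum_mul, mul_sum]
      refine sum_congr rfl fun i _ => sum_congr rfl fun j _ => 
        sum_congr rfl fun k _ => sum_congr rfl fun l _ => by ring
    rw [q2, q4]
    ring
  rw [h1]
  simp only [map_add, map_sum, gE_C_mul, gE_C, gE4, gE2, W4_0, W4_2, W4_4, W2_0, W2_2]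
  simp only [kd, mul_add, add_mul, sum_add_distrib, mul_ite, ite_mul, mul_one, mul_zero, one_mul, zero_mul]
  simp only [sum_ite_eq, sum_ite_eq', mem_univ, if_true, sum_const_zero, sum_ite_irrel, mul_zero]
  have f1 : ∑ i, ∑ j, (A i j + A j i) ^ 2
      = ∑ x, ∑ y, A x y * A x y * 2 + ∑ x, ∑ y, A x y * A y x * 2 := by
    have hs : ∑ x, ∑ y, A y x * A y x = ∑ x, ∑ y, A x y * A x y := sum_comm
    have : ∑ i, ∑ j, (A i j + A j i) ^ 2
        = ∑ x, ∑ y, A x y * A x y + ∑ x, ∑ y, A x y * A y x * 2 + ∑ x, ∑ y, A y x * A y x := by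
      simp only [← sum_add_distrib]
      exact sum_congr rfl fun i _ => sum_congr rfl fun j _ => by ring
    rw [this, hs]
    simp only [← sum_mul]
    ring
  have f2 : 8 * ∑ i, (A p i + A i p) ^ 2 = ∑ x, A x p * A x p * 8 + ∑ x, A x p * A p x * 8
      + ∑ x, A p x * A x p * 8 + ∑ x, A p x * A p x * 8 := by
    simp only [← sum_add_distrib, mul_sum]
    exact sum_congr rfl fun i _ => by ring
  have f3 : ∑ x, ∑ y, A x x * A y y * 2 = 2 * (∑ i, A i i) ^ 2 := by
    simp only [← sum_mul, ← mul_sum]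
    ring
  have f4 : ∑ x, A x x * A p p * 8 = 8 * A p p * ∑ i, A i i := by
    simp only [← sum_mul]; ring
  have f5 : ∑ x, A p p * A x x * 8 = 8 * A p p * ∑ i, A i i := by
    simp only [← sum_mul, ← mul_sum]; ring
  rw [f1, f2, f3, f4, f5]
  ring
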